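/- The following are equivalent: (1) R is almost coherent; (2) Hom_R(E, I) is almost flat for every almost absolutely pure R-module E and every injective R-module I; (3) for every injective cogenerator I and every almost absolutely pure R-module E, Hom_R(E, I) is almost flat; (4) Hom_R(Hom_R(F, I₁), I₂) is almost flat for every almost flat R-module F and all injective R-modules I₁, I₂; (5) for all injective cogenerators I₁, I₂ and every almost flat R-module F, Hom_R(Hom_R(F, I₁), I₂) is almost flat. -/

import Mathlib

universe u

open CategoryTheory

/-- A module `F` is almost flat if `Tor₁ᴿ(N, F)` is almost zero for every module `N`. -/
def IsAlmostFlat {R : Type u} [CommRing R] (m : Ideal R)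
    (F : Type u) [AddCommGroup F] [Module R F] : Prop :=
  ∀ (N : Type u) [AddCommGroup N] [Module R N],
    ∀ s ∈ m, ∀ x : ((Tor (ModuleCat.{u} R) 1).obj (ModuleCat.of R N)).obj (ModuleCat.of R F),
      s • x = 0

/-- A module `E` is almost absolutely pure if `Ext¹ᴿ(N, E)` is almost zero for every
finitely presented module `N`. -/
def IsAlmostAbsolutelyPure {R : Type u} [CommRing R] (m : Ideal R)
    (E : Type u) [AddCommGroup E] [Module R E] : Prop :=
  ∀ (N : Type u) [AddCommGroup N] [Module R N], Module.FinitePresentation R N →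
    ∀ s ∈ m, ∀ x : ((Ext R (ModuleCat.{u} R) 1).obj
        (Opposite.op (ModuleCat.of R N))).obj (ModuleCat.of R E),
      s • x = 0

/-- An injective cogenerator: an injective module `E` such that any module with no
nonzero maps to `E` is trivial. -/
def IsInjectiveCogenerator (R : Type u) [CommRing R]
    (E : Type u) [AddCommGroup E] [Module R E] : Prop :=
  Module.Injective R E ∧
    ∀ (T : Type u) [AddCommGroup T] [Module R T],
      (∀ φ : T →ₗ[R] E, φ = 0) → Subsingleton T

/-- A module `M` is almost finitely generated (relative to the ideal `m`). -/
def IsAlmostFG {R : Type u} [CommRing R] (m : Ideal R)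
    (M : Type u) [AddCommGroup M] [Module R M] : Prop :=
  ∀ s ∈ m, ∃ (n : ℕ) (f : (Fin n → R) →ₗ[R] M), ∀ y : M, s • y ∈ LinearMap.range f

/-- A module `M` is almost finitely presented (relative to the ideal `m`). -/
def IsAlmostFP {R : Type u} [CommRing R] (m : Ideal R)
    (M : Type u) [AddCommGroup M] [Module R M] : Prop :=
  ∀ s ∈ m, ∀ t ∈ m, ∃ (n k : ℕ) (g : (Fin k → R) →ₗ[R] (Fin n → R))
    (f : (Fin n → R) →ₗ[R] M),
      f ∘ₗ g = 0 ∧ (∀ y : M, s • y ∈ LinearMap.range f) ∧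
        (∀ x ∈ LinearMap.ker f, t • x ∈ LinearMap.range g)

/-- `R` is almost coherent: every almost finitely generated ideal is
almost finitely presented. -/
def IsAlmostCoherent {R : Type u} [CommRing R] (m : Ideal R) : Prop :=
  ∀ I : Ideal R, IsAlmostFG m I → IsAlmostFP m I

open scoped TensorProduct

lemma hom_iff {R : Type u} [CommRing R] (S : ShortComplex (ModuleCat.{u} R)) (s : R) :
    (∀ x : S.homology, s • x = 0) ↔ ∀ y : S.X₂, S.g y = 0 → ∃ z, S.f z = s • y := by
  let e := S.moduleCatHomologyIso.toLinearEquiv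
  constructor
  · intro h y hy
    let k : LinearMap.ker S.g.hom := ⟨y, hy⟩
    let q : S.moduleCatLeftHomologyData.H := (LinearMap.range S.moduleCatToCycles).mkQ k
    have h1 : s • q = 0 := by
      have := h (e.symm q)
      rw [← map_smul] at this
      exact e.symm.injective (this.trans (map_zero _).symm)
    have h2 : (LinearMap.range S.moduleCatToCycles).mkQ (s • k) = 0 := by
      rw [map_smul]; exact h1
    rw [← LinearMap.mem_ker, Submodule.ker_mkQ] at h2
    obtain ⟨z, hz⟩ := h2
    exact ⟨z, congrArg Subtype.val hz⟩
  · intro h x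
    apply e.injective
    rw [map_smul, map_zero]
    obtain ⟨k, hk⟩ := (LinearMap.range S.moduleCatToCycles).mkQ_surjective (e x)
    obtain ⟨z, hz⟩ := h k.1 k.2
    have h2 : s • k = S.moduleCatToCycles z := Subtype.ext hz.symm
    have h3 : (LinearMap.range S.moduleCatToCycles).mkQ (s • k) = 0 := by
      rw [← LinearMap.mem_ker, Submodule.ker_mkQ, h2]
      exact ⟨z, rfl⟩
    rw [map_smul, hk] at h3
    exact h3

lemma iso_killed {R : Type u} [CommRing R] {X Y : ModuleCat.{u} R} (e : X ≅ Y) (s : R) :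
    (∀ x : X, s • x = 0) ↔ ∀ y : Y, s • y = 0 := by
  let e' := e.toLinearEquiv
  constructor
  · intro h y
    apply e'.symm.injective
    rw [map_smul, h, map_zero]
  · intro h y
    apply e'.injective
    rw [map_smul, h, map_zero]

lemma complex_killed {R : Type u} [CommRing R] {ι : Type} {c : ComplexShape ι}
    (K : HomologicalComplex (ModuleCat.{u} R) c) (i j k : ι) (hi : c.prev j = i) (hk : c.next j = k)
    (s : R) :
    (∀ x : K.homology j, s • x = 0) ↔
      ∀ y : K.X j, K.d j k y = 0 → ∃ z, K.d i j z = s • y := by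
  rw [iso_killed (K.homologyIsoSc' i j k hi hk), hom_iff]
  rfl

lemma tor_data {R : Type u} [CommRing R] (F : Type u) [AddCommGroup F] [Module R F] :
    ∃ (P0 P1 P2 : ModuleCat.{u} R) (p : P0 →ₗ[R] F) (d1 : P1 →ₗ[R] P0) (d2 : P2 →ₗ[R] P1),
      Module.Projective R P0 ∧ Function.Surjective p ∧ Function.Exact d1 p ∧ Function.Exact d2 d1 ∧
      (∀ (N : Type u) [AddCommGroup N] [Module R N] (s : R),
        (∀ x : ((Tor (ModuleCat.{u} R) 1).obj (ModuleCat.of R N)).obj (ModuleCat.of R F),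
          s • x = 0) ↔
        ∀ q : N ⊗[R] P1, d1.lTensor N q = 0 → ∃ r, d2.lTensor N r = s • q) ∧
      (∀ (E : Type u) [AddCommGroup E] [Module R E] (s : R),
        (∀ x : ((Ext R (ModuleCat.{u} R) 1).obj
          (Opposite.op (ModuleCat.of R F))).obj (ModuleCat.of R E), s • x = 0) ↔
        ∀ q : P1 →ₗ[R] E, q ∘ₗ d2 = 0 → ∃ h : P0 →ₗ[R] E, h ∘ₗ d1 = s • q) := by
  let P := projectiveResolution (ModuleCat.of R F)
  refine ⟨P.complex.X 0, P.complex.X 1, P.complex.X 2, (P.π.f 0).hom, (P.complex.d 1 0).hom,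
    (P.complex.d 2 1).hom, ?_, ?_, ?_, ?_, ?_, ?_⟩
  · exact (IsProjective.iff_projective _).2 (P.projective 0)
  · exact (ModuleCat.epi_iff_surjective (P.π.f 0)).1 inferInstance
  · have := P.exact₀
    rw [ShortComplex.ShortExact.moduleCat_exact_iff_function_exact] at this
    exact this
  · have := P.exact_succ 0
    rw [ShortComplex.ShortExact.moduleCat_exact_iff_function_exact] at this
    exact this
  · intro N _ _ s
    exact (iso_killed (P.isoLeftDerivedObj
      ((MonoidalCategory.tensoringLeft (ModuleCat.{u} R)).obj (ModuleCat.of R N)) 1) s).trans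
      (complex_killed _ 2 1 0 (by simp) (by simp) s)
  · intro N _ _ s
    rw [iso_killed (P.isoExt 1 (ModuleCat.of R N))]
    rw [complex_killed _ 0 1 2 (by simp) (by simp)]
    constructor
    · intro h q hq
      obtain ⟨z, hz⟩ := h (ModuleCat.ofHom q) (ModuleCat.hom_ext hq)
      exact ⟨z.hom, congrArg ModuleCat.Hom.hom hz⟩
    · intro h q hq
      obtain ⟨z, hz⟩ := h q.hom (congrArg ModuleCat.Hom.hom hq)
      exact ⟨ModuleCat.ofHom z, ModuleCat.hom_ext hz⟩

/-- `s • x` is a combination of elements of the set `P` of vectors. -/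
def Triv {R : Type u} [CommRing R] {F : Type u} [AddCommGroup F] [Module R F] {ι : Type}
    (P : Set (ι → R)) (x : ι → F) (s : R) : Prop :=
  ∃ (κ : Type) (_ : Fintype κ) (b : κ → ι → R) (z : κ → F),
    (∀ j, b j ∈ P) ∧ ∀ i, s • x i = ∑ j, b j i • z j

lemma Triv.add {R : Type u} [CommRing R] {F : Type u} [AddCommGroup F] [Module R F] {ι : Type}
    {P : Set (ι → R)} {x : ι → F} {s t : R} (hs : Triv P x s) (ht : Triv P x t) :
    Triv P x (s + t) := by
  obtain ⟨κ, _, b, z, hb, hz⟩ := hs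
  obtain ⟨κ', _, b', z', hb', hz'⟩ := ht
  refine ⟨κ ⊕ κ', inferInstance, Sum.elim b b', Sum.elim z z', ?_, ?_⟩
  · rintro (j | j)
    · exact hb j
    · exact hb' j
  · intro i
    rw [add_smul, hz, hz', Fintype.sum_sum_type]
    rfl

lemma Triv.of_mul {R : Type u} [CommRing R] (m : Ideal R) (hm : m * m = m)
    {F : Type u} [AddCommGroup F] [Module R F] {ι : Type}
    {P : Set (ι → R)} {x : ι → F} (h : ∀ s ∈ m, ∀ t ∈ m, Triv P x (s * t)) :
    ∀ s ∈ m, Triv P x s := by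
  intro s hs
  rw [← hm] at hs
  exact Submodule.mul_induction_on hs h (fun _ _ h1 h2 => h1.add h2)

/-- The almost equational criterion for flatness. -/
def AFlat {R : Type u} [CommRing R] (m : Ideal R) (F : Type u) [AddCommGroup F] [Module R F] :
    Prop :=
  ∀ (ι : Type) [Fintype ι] (a : ι → R) (x : ι → F), ∑ i, a i • x i = 0 →
    ∀ s ∈ m, Triv {v : ι → R | ∑ i, a i * v i = 0} x s

lemma AFlat.congr {R : Type u} [CommRing R] {m : Ideal R} {F G : Type u} [AddCommGroup F]
    [Module R F] [AddCommGroup G] [Module R G] (e : F ≃ₗ[R] G) (h : AFlat m F) : AFlat m G := by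
  intro ι _ a x hx s hs
  obtain ⟨κ, _, b, z, hb, hz⟩ := h ι a (fun i => e.symm (x i)) (by
    simp_rw [← map_smul, ← map_sum]; rw [hx, map_zero]) s hs
  refine ⟨κ, inferInstance, b, fun j => e (z j), hb, fun i => ?_⟩
  have := congrArg e (hz i)
  simpa using this

lemma AFlat.matrix {R : Type u} [CommRing R] {m : Ideal R} (hm : m * m = m) {F : Type u}
    [AddCommGroup F] [Module R F] (h : AFlat m F) (p : ℕ) :
    ∀ (ι : Type) [Fintype ι] (a : Fin p → ι → R) (x : ι → F), (∀ r, ∑ i, a r i • x i = 0) →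
      ∀ s ∈ m, Triv {v : ι → R | ∀ r, ∑ i, a r i * v i = 0} x s := by
  induction p with
  | zero =>
    intro ι _ a x _ s _
    classical
    refine ⟨ι, inferInstance, fun j i => if i = j then s else 0, x, fun j r => r.elim0, ?_⟩
    intro i
    simp
  | succ p ih =>
    intro ι _ a x hx
    apply Triv.of_mul m hm
    intro s hs t ht
    obtain ⟨κ, _, b, z, hb, hz⟩ := h ι (a 0) x (hx 0) s hs
    obtain ⟨κ', _, b', z', hb', hz'⟩ := ih κ (fun r j => ∑ i, a r.succ i * b j i) z (by
      intro r
      have : ∑ i, a r.succ i • (s • x i) = 0 := by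
        simp_rw [smul_comm _ s, ← Finset.smul_sum, hx, smul_zero]
      rw [← this]
      simp_rw [hz, Finset.sum_smul, Finset.smul_sum, mul_smul]
      exact Finset.sum_comm) t ht
    refine ⟨κ', inferInstance, fun j i => ∑ k, b' j k * b k i, z', ?_, ?_⟩
    · intro j r
      have key : ∀ r, ∑ i, a r i * ∑ k, b' j k * b k i =
          ∑ k, (∑ i, a r i * b k i) * b' j k := by
        intro r
        simp_rw [Finset.mul_sum, Finset.sum_mul]
        rw [Finset.sum_comm]
        refine Finset.sum_congr rfl fun _ _ => Finset.sum_congr rfl fun _ _ => by ring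
      rw [key]
      refine Fin.cases ?_ (fun r => ?_) r
      · have : ∀ k, ∑ i, a 0 i * b k i = 0 := hb
        simp [this]
      · exact hb' j r
    · intro i
      rw [mul_comm, mul_smul, hz, Finset.smul_sum]
      simp_rw [smul_comm t, hz', Finset.sum_smul, Finset.smul_sum, mul_smul]
      rw [Finset.sum_comm]
      refine Finset.sum_congr rfl fun _ _ => Finset.sum_congr rfl fun _ _ => smul_comm _ _ _

lemma exists_fin_tmul {R : Type u} [CommRing R] {M N : Type u} [AddCommGroup M] [Module R M]
    [AddCommGroup N] [Module R N] (c : M ⊗[R] N) :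
    ∃ (p : ℕ) (x : Fin p → M) (y : Fin p → N), c = ∑ i, x i ⊗ₜ[R] y i := by
  induction c with
  | zero => exact ⟨0, Fin.elim0, Fin.elim0, by simp⟩
  | tmul x y => exact ⟨1, fun _ => x, fun _ => y, by simp⟩
  | add c d hc hd =>
    obtain ⟨p, x, y, rfl⟩ := hc
    obtain ⟨q, x', y', rfl⟩ := hd
    exact ⟨p + q, Fin.append x x', Fin.append y y', by simp [Fin.sum_univ_add]⟩

lemma AFlat.isAlmostFlat {R : Type u} [CommRing R] {m : Ideal R} (hm : m * m = m) {F : Type u}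
    [AddCommGroup F] [Module R F] (h : AFlat m F) : IsAlmostFlat m F := by
  obtain ⟨P0, P1, P2, p, d1, d2, hP, hp, hd1, hd2, hT, -⟩ := tor_data (R := R) F
  intro N _ _ s hs
  rw [hT N s]
  intro c hc
  obtain ⟨l, n, q, rfl⟩ := exists_fin_tmul c
  simp only [map_sum, LinearMap.lTensor_tmul] at hc
  have hv := TensorProduct.vanishesTrivially_of_sum_tmul_eq_zero_of_rTensor_injective R
    (Module.Flat.rTensor_preserves_injective_linearMap _ (Submodule.subtype_injective _)) hc
  obtain ⟨k, a, y, h1, h2⟩ := hv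
  obtain ⟨κ, _, b, z, hb, hz⟩ := h.matrix hm l (Fin k) a (fun j => p (y j)) (by
    intro i
    simp_rw [← map_smul, ← map_sum]
    rw [← h1]
    exact hd1.apply_apply_eq_zero _) s hs
  choose zz hzz using fun j => hp (z j)
  have h3 : ∀ j, ∃ r, d1 r = s • y j - ∑ t, b t j • zz t := by
    intro j
    refine (hd1 _).1 ?_
    simp [hzz, hz]
  choose r hr using h3
  have h4 : ∀ i, ∃ v, d2 v = s • q i - ∑ j, a i j • r j := by
    intro i
    refine (hd2 _).1 ?_
    simp only [map_sub, map_smul, map_sum, hr, h1, smul_sub, Finset.sum_sub_distrib]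
    have : ∑ j, a i j • ∑ t, b t j • zz t = 0 := by
      simp_rw [Finset.smul_sum, ← mul_smul]
      rw [Finset.sum_comm]
      simp_rw [← Finset.sum_smul]
      refine Finset.sum_eq_zero fun t _ => ?_
      have : ∑ j, a i j * b t j = 0 := hb t i
      rw [this, zero_smul]
    rw [this, Finset.smul_sum]
    simp_rw [smul_comm s]
    simp
  choose v hv using h4
  refine ⟨∑ i, n i ⊗ₜ v i, ?_⟩
  simp only [map_sum, LinearMap.lTensor_tmul, hv, TensorProduct.tmul_sub, Finset.sum_sub_distrib,
    TensorProduct.tmul_sum, TensorProduct.tmul_smul, Finset.smul_sum]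
  rw [sub_eq_self, Finset.sum_comm]
  refine Finset.sum_eq_zero fun j _ => ?_
  simp_rw [← TensorProduct.tmul_smul, ← TensorProduct.smul_tmul]
  rw [← TensorProduct.sum_tmul, h2, TensorProduct.zero_tmul]

lemma IsAlmostFlat.aflat {R : Type u} [CommRing R] {m : Ideal R} {F : Type u}
    [AddCommGroup F] [Module R F] (h : IsAlmostFlat m F) : AFlat m F := by
  obtain ⟨P0, P1, P2, p, d1, d2, hP, hp, hd1, hd2, hT, -⟩ := tor_data (R := R) F
  intro ι _ a x hx s hs
  let A : Ideal R := Ideal.span (Set.range a)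
  have hN := (hT (R ⧸ A) s).1 (h (R ⧸ A) s hs)
  choose y hy using fun i => hp (x i)
  obtain ⟨q, hq⟩ : ∃ q, d1 q = ∑ i, a i • y i := by
    refine (hd1 _).1 ?_
    simp [hy, hx]
  have ha : ∀ i, a i • (1 : R ⧸ A) = 0 := by
    intro i
    rw [Algebra.smul_def, mul_one]
    exact Ideal.Quotient.eq_zero_iff_mem.2 (Ideal.subset_span ⟨i, rfl⟩)
  obtain ⟨r, hr⟩ := hN ((1 : R ⧸ A) ⊗ₜ q) (by
    rw [LinearMap.lTensor_tmul, hq, TensorProduct.tmul_sum]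
    refine Finset.sum_eq_zero fun i _ => ?_
    rw [← TensorProduct.smul_tmul, ha, TensorProduct.zero_tmul])
  have hr' : ∃ r', r = (1 : R ⧸ A) ⊗ₜ r' := by
    clear hr
    induction r with
    | zero => exact ⟨0, by simp⟩
    | tmul c y =>
      obtain ⟨c, rfl⟩ := Ideal.Quotient.mk_surjective c
      refine ⟨c • y, ?_⟩
      rw [← TensorProduct.smul_tmul, Algebra.smul_def, mul_one]
      rfl
    | add u v hu hv =>
      obtain ⟨u', rfl⟩ := hu
      obtain ⟨v', rfl⟩ := hv
      exact ⟨u' + v', by rw [TensorProduct.tmul_add]⟩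
  obtain ⟨r', rfl⟩ := hr'
  have h0 : (1 : R ⧸ A) ⊗ₜ[R] (s • q - d2 r') = 0 := by
    rw [TensorProduct.tmul_sub, TensorProduct.tmul_smul, ← hr, LinearMap.lTensor_tmul, sub_self]
  have h1 : s • q - d2 r' ∈ A • (⊤ : Submodule R P1) := by
    have := congrArg (TensorProduct.quotTensorEquivQuotSMul P1 A) h0
    rw [map_zero] at this
    have h2 := TensorProduct.quotTensorEquivQuotSMul_mk_tmul (M := P1) A 1 (s • q - d2 r')
    rw [map_one, this, one_smul] at h2
    exact (Submodule.Quotient.mk_eq_zero _).1 h2.symm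
  have h2 : ∀ w ∈ A • (⊤ : Submodule R P1), ∃ v : ι → P1, w = ∑ i, a i • v i := by
    intro w hw
    refine Submodule.smul_induction_on hw ?_ ?_
    · intro c hc n _
      obtain ⟨k, rfl⟩ := (Submodule.mem_span_range_iff_exists_fun R).1 hc
      refine ⟨fun i => k i • n, ?_⟩
      rw [Finset.sum_smul]
      refine Finset.sum_congr rfl fun i _ => ?_
      rw [smul_comm, smul_assoc]
    · rintro _ _ ⟨v, rfl⟩ ⟨v', rfl⟩
      exact ⟨v + v', by simp [Finset.sum_add_distrib]⟩
  obtain ⟨v, hv⟩ := h2 _ h1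
  have h3 : ∑ i, a i • (s • y i - d1 (v i)) = 0 := by
    have := congrArg d1 hv
    rw [map_sub, hd2.apply_apply_eq_zero, map_smul, hq, sub_zero, Finset.smul_sum] at this
    simp_rw [smul_sub, Finset.sum_sub_distrib, smul_comm _ s, this]
    simp
  obtain ⟨k, b, z, hz, hb⟩ := Module.Flat.isTrivialRelation_of_sum_smul_eq_zero h3
  refine ⟨Fin k, inferInstance, fun j i => b i j, fun j => p (z j), hb, ?_⟩
  intro i
  have := congrArg p (hz i)
  rw [map_sub, hd1.apply_apply_eq_zero, map_smul, hy, sub_zero] at this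
  simpa using this

/-- The almost extension property for maps from finitely generated ideals. -/
def EP {R : Type u} [CommRing R] (m : Ideal R) (E : Type u) [AddCommGroup E] [Module R E] :
    Prop :=
  ∀ (ι : Type) [Fintype ι] (a : ι → R) (e : ι → E),
    (∀ k : ι → R, ∑ i, a i * k i = 0 → ∑ i, k i • e i = 0) →
      ∀ s ∈ m, ∃ e' : E, ∀ i, s • e i = a i • e'

lemma IsAlmostAbsolutelyPure.ep {R : Type u} [CommRing R] {m : Ideal R} {E : Type u}
    [AddCommGroup E] [Module R E] (h : IsAlmostAbsolutelyPure m E) : EP m E := by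
  intro ι _ a e hae s hs
  classical
  let p : (ι → R) →ₗ[R] R := Fintype.linearCombination R a
  let A : Ideal R := LinearMap.range p
  have hker : LinearMap.ker p ≤ LinearMap.ker (Fintype.linearCombination R e) := by
    intro k hk
    rw [LinearMap.mem_ker, Fintype.linearCombination_apply] at hk ⊢
    apply hae
    rw [← hk]
    exact Finset.sum_congr rfl fun i _ => mul_comm _ _
  let g : A →ₗ[R] E := (LinearMap.ker p).liftQ (Fintype.linearCombination R e) hker ∘ₗ
    p.quotKerEquivRange.symm.toLinearMap
  have hg : ∀ v (hv : p v ∈ A), g ⟨p v, hv⟩ = ∑ i, v i • e i := by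
    intro v hv
    have : p.quotKerEquivRange.symm ⟨p v, hv⟩ = Submodule.Quotient.mk v := by
      rw [LinearEquiv.symm_apply_eq]
      rfl
    change (LinearMap.ker p).liftQ _ hker (p.quotKerEquivRange.symm ⟨p v, hv⟩) = _
    rw [this]
    rfl
  have hfp : Module.FinitePresentation R (R ⧸ A) := by
    refine Module.finitePresentation_of_surjective A.mkQ A.mkQ_surjective ?_
    rw [Submodule.ker_mkQ]
    exact Module.Finite.iff_fg.1 inferInstance
  obtain ⟨P0, P1, P2, π, d1, d2, hP, hπ, hd1, hd2, -, hT⟩ := tor_data (R := R) (R ⧸ A)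
  obtain ⟨l, hl⟩ := Module.projective_lifting_property A.mkQ π A.mkQ_surjective
  have hl' : ∀ x, A.mkQ (l x) = π x := fun x => LinearMap.congr_fun hl x
  have hmem : ∀ q, l (d1 q) ∈ A := by
    intro q
    rw [← Submodule.ker_mkQ A, LinearMap.mem_ker, hl', hd1.apply_apply_eq_zero]
  obtain ⟨f, hf⟩ := (hT E s).1 (h (R ⧸ A) hfp s hs) (g ∘ₗ (l ∘ₗ d1).codRestrict A hmem) (by
    ext x
    have : (l ∘ₗ d1).codRestrict A hmem (d2 x) = 0 := by
      apply Subtype.ext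
      simp [hd2.apply_apply_eq_zero]
    simp only [LinearMap.comp_apply, this, map_zero, LinearMap.zero_apply])
  obtain ⟨p0, hp0⟩ := hπ (A.mkQ 1)
  have hc : l p0 - 1 ∈ A := by
    rw [← Submodule.ker_mkQ A, LinearMap.mem_ker, map_sub, hl', hp0, sub_self]
  refine ⟨f p0 - s • g ⟨_, hc⟩, fun i => ?_⟩
  have hai : p (Pi.single i 1) = a i := by simp [p]
  have hmi : a i ∈ A := ⟨_, hai⟩
  obtain ⟨q, hq⟩ : ∃ q, d1 q = a i • p0 := by
    refine (hd1 _).1 ?_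
    rw [map_smul, hp0, ← map_smul, ← LinearMap.mem_ker, Submodule.ker_mkQ, smul_eq_mul, mul_one]
    exact hmi
  have h1 := LinearMap.congr_fun hf q
  have h2 : (l ∘ₗ d1).codRestrict A hmem q = ⟨a i, hmi⟩ + a i • ⟨_, hc⟩ := by
    apply Subtype.ext
    simp [hq, mul_sub]
  have h3 : g ⟨a i, hmi⟩ = e i := by
    have := hg (Pi.single i 1) (by rw [hai]; exact hmi)
    simp only [hai] at this
    rw [this]
    simp [Pi.single_apply]
  simp only [LinearMap.comp_apply, LinearMap.smul_apply, h2, map_add, map_smul, h3, hq] at h1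
  rw [smul_sub, h1, smul_add, smul_comm s (a i)]
  abel

lemma factor {R : Type u} [CommRing R] {I M M' : Type u} [AddCommGroup I] [Module R I]
    [AddCommGroup M] [Module R M] [AddCommGroup M'] [Module R M'] (hI : Module.Injective R I)
    (A : M →ₗ[R] M') (f : M →ₗ[R] I) (h : ∀ x, A x = 0 → f x = 0) :
    ∃ g : M' →ₗ[R] I, ∀ x, g (A x) = f x := by
  let A' := (LinearMap.ker A).liftQ A le_rfl
  have hA' : Function.Injective A' := by
    rw [← LinearMap.ker_eq_bot]
    exact Submodule.ker_liftQ_eq_bot _ _ _ le_rfl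
  obtain ⟨g, hg⟩ := hI.out A' hA' ((LinearMap.ker A).liftQ f h)
  exact ⟨g, fun x => hg (Submodule.Quotient.mk x)⟩

lemma isAlmostAbsolutelyPure_hom {R : Type u} [CommRing R] (m : Ideal R) {I : Type u}
    [AddCommGroup I] [Module R I] (hI : Module.Injective R I) (J : Type u) :
    IsAlmostAbsolutelyPure m ((J →₀ R) →ₗ[R] I) := by
  intro N _ _ _ s _
  obtain ⟨P0, P1, P2, π, d1, d2, hP, hπ, hd1, hd2, -, hT⟩ := tor_data (R := R) N
  rw [hT]
  intro q hq
  let e := Finsupp.llift I R R J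
  have h1 : ∀ j, ∃ g : P0 →ₗ[R] I, ∀ x, g (d1 x) = e.symm (q x) j := by
    intro j
    refine factor hI d1 (LinearMap.proj j ∘ₗ e.symm.toLinearMap ∘ₗ q) ?_
    intro x hx
    obtain ⟨y, rfl⟩ := (hd2 x).1 hx
    have : q (d2 y) = 0 := LinearMap.congr_fun hq y
    simp [this]
  choose g hg using h1
  refine ⟨s • (e.toLinearMap ∘ₗ LinearMap.pi g), ?_⟩
  ext1 x
  simp only [LinearMap.comp_apply, LinearMap.smul_apply]
  congr 1
  change e _ = _
  rw [← LinearEquiv.eq_symm_apply]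
  funext j
  exact hg j x

lemma ep_hom {R : Type u} [CommRing R] {m : Ideal R} {F I : Type u} [AddCommGroup F] [Module R F]
    [AddCommGroup I] [Module R I] (hI : Module.Injective R I) (hF : AFlat m F) :
    EP m (F →ₗ[R] I) := by
  intro ι _ a e hae s hs
  classical
  let A : (ι → F) →ₗ[R] F := ∑ i, a i • LinearMap.proj i
  let f : (ι → F) →ₗ[R] I := s • ∑ i, e i ∘ₗ LinearMap.proj i
  obtain ⟨g, hg⟩ := factor hI A f (by
    intro x hx
    have hx' : ∑ i, a i • x i = 0 := by simpa [A] using hx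
    obtain ⟨κ, _, b, z, hb, hz⟩ := hF ι a x hx' s hs
    have h0 : ∀ j, ∑ i, b j i • e i = 0 := fun j => hae _ (hb j)
    have : f x = ∑ i, e i (s • x i) := by simp [f, Finset.smul_sum]
    rw [this]
    simp_rw [hz, map_sum]
    rw [Finset.sum_comm]
    refine Finset.sum_eq_zero fun j _ => ?_
    simpa using LinearMap.congr_fun (h0 j) (z j))
  refine ⟨g, fun i => ?_⟩
  ext x
  have h1 := hg (Pi.single i x)
  have h2 : A (Pi.single i x) = a i • x := by simp [A, Pi.single_apply]
  have h3 : f (Pi.single i x) = s • e i x := by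
    simp only [f, LinearMap.smul_apply, LinearMap.sum_apply, LinearMap.comp_apply,
      LinearMap.proj_apply]
    rw [Finset.sum_eq_single i]
    · simp
    · intro j _ hj
      simp [hj]
    · simp
  rw [h2, h3, map_smul] at h1
  exact h1.symm

/-- Relation modules of finite families are almost finitely generated. -/
def KFG {R : Type u} [CommRing R] (m : Ideal R) : Prop :=
  ∀ (ι : Type) [Fintype ι] (a : ι → R), ∀ s ∈ m, ∃ K0 : Submodule R (ι → R), K0.FG ∧
    (∀ k ∈ K0, ∑ i, a i * k i = 0) ∧ ∀ k : ι → R, ∑ i, a i * k i = 0 → s • k ∈ K0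

lemma IsAlmostCoherent.kfg {R : Type u} [CommRing R] {m : Ideal R} (hm : m * m = m)
    (h : IsAlmostCoherent m) : KFG m := by
  intro ι _ a s hs
  classical
  rw [← hm] at hs
  refine Submodule.mul_induction_on hs ?_ ?_
  · intro s hs t ht
    let p : (ι → R) →ₗ[R] R := Fintype.linearCombination R a
    have hp : ∀ k, p k = ∑ i, a i * k i := by
      intro k
      rw [Fintype.linearCombination_apply]
      exact Finset.sum_congr rfl fun i _ => mul_comm _ _
    let A : Ideal R := LinearMap.range p
    let p' : (ι → R) →ₗ[R] A := p.rangeRestrict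
    have hp' : Function.Surjective p' := p.surjective_rangeRestrict
    have hp0 : ∀ k, p' k = 0 ↔ ∑ i, a i * k i = 0 := by
      intro k
      rw [← hp]
      exact Subtype.ext_iff
    have hfg : IsAlmostFG m A := by
      intro s _
      obtain ⟨n, f, hf⟩ := Module.Finite.exists_fin' R A
      exact ⟨n, f, fun y => hf _⟩
    obtain ⟨n, k, g, f, hfg, hf, hg⟩ := h A hfg s hs t ht
    obtain ⟨B, hB⟩ := Module.projective_lifting_property p' f hp'
    have hB' : ∀ x, p' (B x) = f x := fun x => LinearMap.congr_fun hB x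
    choose α hα using fun i => hf (p' (Pi.single i 1))
    let C : (ι → R) →ₗ[R] (Fin n → R) := Fintype.linearCombination R α
    have hC : ∀ x, f (C x) = s • p' x := by
      intro x
      have : f ∘ₗ C = s • p' := by
        refine LinearMap.pi_ext' fun i => LinearMap.ext_ring ?_
        simp [C, hα]
      exact LinearMap.congr_fun this x
    refine ⟨LinearMap.range (B ∘ₗ g) ⊔ LinearMap.range (B ∘ₗ C - s • LinearMap.id), ?_, ?_, ?_⟩
    · exact Submodule.FG.sup (Module.Finite.iff_fg.1 inferInstance)
        (Module.Finite.iff_fg.1 inferInstance)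
    · intro x hx
      rw [← hp0]
      obtain ⟨_, ⟨y, rfl⟩, _, ⟨z, rfl⟩, rfl⟩ := Submodule.mem_sup.1 hx
      have : f (g y) = 0 := LinearMap.congr_fun hfg y
      simp [hB', hC, this]
    · intro x hx
      rw [← hp0] at hx
      obtain ⟨y, hy⟩ := hg (C x) (by rw [LinearMap.mem_ker, hC, hx, smul_zero])
      refine Submodule.mem_sup.2 ⟨_, ⟨y, rfl⟩, _, ⟨-t • x, rfl⟩, ?_⟩
      simp [hy]
      rw [mul_smul, smul_comm]
  · rintro s t ⟨K, hK, hK1, hK2⟩ ⟨K', hK', hK1', hK2'⟩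
    refine ⟨K ⊔ K', hK.sup hK', ?_, ?_⟩
    · intro x hx
      obtain ⟨y, hy, z, hz, rfl⟩ := Submodule.mem_sup.1 hx
      simp [mul_add, Finset.sum_add_distrib, hK1 y hy, hK1' z hz]
    · intro x hx
      rw [add_smul]
      exact Submodule.add_mem_sup (hK2 x hx) (hK2' x hx)

lemma KFG.isAlmostCoherent {R : Type u} [CommRing R] {m : Ideal R} (h : KFG m) :
    IsAlmostCoherent m := by
  intro A hA s hs t ht
  obtain ⟨n, f, hf⟩ := hA s hs
  obtain ⟨K, hK, hK1, hK2⟩ := h (Fin n) (fun i => (f (Pi.single i 1) : R)) t ht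
  have key : ∀ x, f x = 0 ↔ ∑ i, (f (Pi.single i 1) : R) * x i = 0 := by
    intro x
    have : (f x : R) = ∑ i, (f (Pi.single i 1) : R) * x i := by
      conv_lhs => rw [pi_eq_sum_univ' x]
      simp only [map_sum, map_smul, AddSubmonoidClass.coe_finsetSum, Submodule.coe_smul,
        smul_eq_mul]
      refine Finset.sum_congr rfl fun i _ => ?_
      rw [mul_comm]
    rw [← this]
    exact Subtype.ext_iff
  have : Module.Finite R K := Module.Finite.iff_fg.2 hK
  obtain ⟨k, g, hg⟩ := Module.Finite.exists_fin' R K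
  refine ⟨n, k, K.subtype ∘ₗ g, f, ?_, hf, ?_⟩
  · refine LinearMap.ext fun x => ?_
    exact (key _).2 (hK1 _ (g x).2)
  · intro x hx
    obtain ⟨y, hy⟩ := hg ⟨_, hK2 x ((key x).1 hx)⟩
    exact ⟨y, by simp [hy]⟩

lemma aflat_hom {R : Type u} [CommRing R] {m : Ideal R} (hm : m * m = m) (hK : KFG m)
    {E I : Type u} [AddCommGroup E] [Module R E] [AddCommGroup I] [Module R I]
    (hI : Module.Injective R I) (hE : EP m E) : AFlat m (E →ₗ[R] I) := by
  intro ι _ a x hx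
  classical
  apply Triv.of_mul m hm
  intro s hs t ht
  obtain ⟨K, hKf, hK1, hK2⟩ := hK ι a s hs
  obtain ⟨r, b, hb⟩ := Submodule.fg_iff_exists_fin_generating_family.1 hKf
  let A : (ι → E) →ₗ[R] (Fin r → E) := LinearMap.pi fun j => ∑ i, b j i • LinearMap.proj i
  have hA : ∀ e j, A e j = ∑ i, b j i • e i := by
    intro e j
    simp [A]
  let f : (ι → E) →ₗ[R] I := ∑ i, x i ∘ₗ LinearMap.proj i
  have hf : ∀ e, f e = ∑ i, x i (e i) := by
    intro e
    simp [f]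
  obtain ⟨g, hg⟩ := factor hI A ((s * t) • f) (by
    intro e he
    obtain ⟨e', he'⟩ := hE ι a (fun i => s • e i) (by
      intro k hk
      have h1 := hK2 k hk
      rw [← hb] at h1
      obtain ⟨c, hc⟩ := (Submodule.mem_span_range_iff_exists_fun R).1 h1
      have h2 : ∀ i, s * k i = ∑ j, c j * b j i := by
        intro i
        have := congrFun hc i
        simpa using this.symm
      have h3 : ∀ j, ∑ i, b j i • e i = 0 := by
        intro j
        rw [← hA, he]
        rfl
      simp_rw [smul_smul, mul_comm _ s, h2, Finset.sum_smul, mul_smul]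
      rw [Finset.sum_comm]
      simp_rw [← Finset.smul_sum, h3, smul_zero, Finset.sum_const_zero]) t ht
    rw [LinearMap.smul_apply, ← map_smul, hf]
    have h4 : ∀ i, ((s * t) • e) i = a i • e' := by
      intro i
      rw [← he', Pi.smul_apply, mul_comm, mul_smul]
    simp_rw [h4]
    simpa using LinearMap.congr_fun hx e')
  refine ⟨Fin r, inferInstance, b, fun j => g ∘ₗ LinearMap.single R (fun _ => E) j, ?_, ?_⟩
  · intro j
    apply hK1
    rw [← hb]
    exact Submodule.subset_span ⟨j, rfl⟩
  · intro i
    ext y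
    have h1 := hg (Pi.single i y)
    have h2 : f (Pi.single i y) = x i y := by
      rw [hf, Finset.sum_eq_single i]
      · simp
      · intro j _ hj
        simp [hj]
      · simp
    have h3 : A (Pi.single i y) = ∑ j, b j i • Pi.single j y := by
      funext j
      rw [hA, Finset.sum_apply, Finset.sum_eq_single i, Finset.sum_eq_single j]
      · simp
      · intro j' _ hj
        simp [hj.symm]
      · simp
      · intro j' _ hj
        simp [hj]
      · simp
    rw [LinearMap.smul_apply, h2, h3] at h1
    simpa using h1.symm

lemma cogen_mem {R : Type u} [CommRing R] {I M : Type u} [AddCommGroup I] [Module R I]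
    [AddCommGroup M] [Module R M] (hI : IsInjectiveCogenerator R I) (K : Submodule R M) (q : M)
    (h : ∀ f : M →ₗ[R] I, (∀ x ∈ K, f x = 0) → f q = 0) : q ∈ K := by
  let T := Submodule.span R {K.mkQ q}
  have hq : K.mkQ q ∈ T := Submodule.mem_span_singleton_self _
  have : Subsingleton T := by
    apply hI.2 T
    intro φ
    obtain ⟨g, hg⟩ := hI.1.out T.subtype T.subtype_injective φ
    have h0 := h (g ∘ₗ K.mkQ) (by
      intro x hx
      rw [LinearMap.comp_apply, (Submodule.Quotient.mk_eq_zero K).2 hx |> fun h => (h : K.mkQ x = 0),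
        map_zero])
    ext ⟨x, hx⟩
    obtain ⟨c, rfl⟩ := Submodule.mem_span_singleton.1 hx
    rw [← hg]
    have h1 : g (K.mkQ q) = 0 := h0
    simp only [Submodule.subtype_apply, map_smul, h1, smul_zero, LinearMap.zero_apply]
  have h1 : (⟨K.mkQ q, hq⟩ : T) = 0 := Subsingleton.elim _ _
  have h2 : K.mkQ q = 0 := congrArg Subtype.val h1
  exact (Submodule.Quotient.mk_eq_zero K).1 h2

lemma exists_x {R : Type u} [CommRing R] {I : Type u} [AddCommGroup I] [Module R I]
    (hI : Module.Injective R I) {ι : Type} [Fintype ι] [DecidableEq ι] (a : ι → R) (J : Type u)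
    [DecidableEq J] (k : J → ι → R) (hk : ∀ j, ∑ i, a i * k j i = 0) :
    ∃ x : ι → ((J → I) →ₗ[R] I), ∑ i, a i • x i = 0 ∧
      ∀ i j y, x i (Pi.single j y) = k j i • y := by
  let L : (ι → (J →₀ I)) →ₗ[R] (ι → J → I) :=
    LinearMap.pi fun i => Finsupp.lcoeFun ∘ₗ LinearMap.proj i
  let W : (J → I) →ₗ[R] (ι → J → I) := LinearMap.pi fun i => a i • LinearMap.id
  let Φ : (ι → (J →₀ I)) →ₗ[R] I :=
    ∑ i, (Finsupp.lsum R fun j => k j i • LinearMap.id) ∘ₗ LinearMap.proj i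
  have hΦ : ∀ f, Φ f = ∑ i, (f i).sum fun j y => k j i • y := by
    intro f
    simp only [Φ, LinearMap.sum_apply, LinearMap.comp_apply, LinearMap.proj_apply,
      Finsupp.lsum_apply]
    rfl
  obtain ⟨g, hg⟩ := factor hI ((LinearMap.range W).mkQ ∘ₗ L) Φ (by
    intro f hf
    have h1 : L f ∈ LinearMap.range W := by
      rw [← Submodule.ker_mkQ (LinearMap.range W)]
      exact hf
    obtain ⟨w, hw⟩ := h1
    have hw' : ∀ i j, f i j = a i • w j := fun i j => (congrFun (congrFun hw i) j).symm
    rw [hΦ]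
    let S : Finset J := Finset.univ.biUnion fun i => (f i).support
    have h2 : ∀ i, ((f i).sum fun j y => k j i • y) = ∑ j ∈ S, k j i • f i j := by
      intro i
      refine Finsupp.sum_of_support_subset _ ?_ _ (by simp)
      exact Finset.subset_biUnion_of_mem (fun i => (f i).support) (Finset.mem_univ i)
    simp_rw [h2]
    rw [Finset.sum_comm]
    refine Finset.sum_eq_zero fun j _ => ?_
    simp_rw [hw', smul_smul, mul_comm (k j _)]
    rw [← Finset.sum_smul, hk, zero_smul])
  refine ⟨fun i => (g ∘ₗ (LinearMap.range W).mkQ) ∘ₗ LinearMap.single R (fun _ => J → I) i, ?_, ?_⟩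
  · ext1 h
    have h1 : ∑ i, a i • (Pi.single i h : ι → J → I) = W h := by
      funext i
      rw [Finset.sum_apply, Finset.sum_eq_single i]
      · simp [W]
      · intro j _ hj
        simp [hj.symm]
      · simp
    have h2 : (LinearMap.range W).mkQ (W h) = 0 :=
      (Submodule.Quotient.mk_eq_zero _).2 ⟨h, rfl⟩
    rw [← h1, map_sum] at h2
    have h3 := congrArg g h2
    simpa using h3
  · intro i j y
    have h1 := hg (Pi.single i (Finsupp.single j y))
    have h2 : L (Pi.single i (Finsupp.single j y)) = Pi.single i (Pi.single j y) := by
      funext i'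
      by_cases h : i' = i
      · subst h
        simp [L, Finsupp.lcoeFun, Finsupp.single_eq_pi_single]
      · simp [L, Finsupp.lcoeFun, h]
    rw [LinearMap.comp_apply, h2, hΦ, Finset.sum_eq_single i] at h1
    · simpa using h1
    · intro i' _ h
      simp [h]
    · simp

lemma kfg_of_aflat {R : Type u} [CommRing R] {m : Ideal R} {I : Type u} [AddCommGroup I]
    [Module R I] (hI : IsInjectiveCogenerator R I)
    (h : ∀ J : Type u, AFlat m (((J →₀ R) →ₗ[R] I) →ₗ[R] I)) : KFG m := by
  classical
  intro ι _ a s hs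
  let J : Type u := {k : ι → R // ∑ i, a i * k i = 0}
  obtain ⟨x, hx0, hx⟩ := exists_x hI.1 a J (fun k => k.1) (fun k => k.2)
  have hJ : AFlat m ((J → I) →ₗ[R] I) :=
    (h J).congr ((Finsupp.llift I R R J).symm.arrowCongr (LinearEquiv.refl R I))
  obtain ⟨κ, _, b, z, hb, hz⟩ := hJ ι a x hx0 s hs
  refine ⟨Submodule.span R (Set.range b), ⟨(Set.finite_range b).toFinset, by simp⟩, ?_, ?_⟩
  · intro k hk
    obtain ⟨c, rfl⟩ := (Submodule.mem_span_range_iff_exists_fun R).1 hk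
    have hb' : ∀ j, ∑ i, a i * b j i = 0 := hb
    have h1 : ∀ i, a i * (∑ j, c j • b j) i = ∑ j, c j * (a i * b j i) := by
      intro i
      rw [Finset.sum_apply, Finset.mul_sum]
      exact Finset.sum_congr rfl fun j _ => mul_left_comm _ _ _
    simp_rw [h1]
    rw [Finset.sum_comm]
    simp_rw [← Finset.mul_sum, hb', mul_zero, Finset.sum_const_zero]
  · intro k hk
    apply cogen_mem hI
    intro f hf
    have hfs : ∀ v : ι → R, f v = ∑ i, v i • f (Pi.single i 1) := by
      intro v
      conv_lhs => rw [pi_eq_sum_univ' v]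
      simp only [map_sum, map_smul]
    have hfb : ∀ j, ∑ i, b j i • f (Pi.single i 1) = 0 := by
      intro j
      rw [← hfs]
      exact hf _ (Submodule.subset_span ⟨j, rfl⟩)
    let k' : J := ⟨k, hk⟩
    have h1 : ∀ i, (s • k) i • f (Pi.single i 1) =
        ∑ j, z j (Pi.single k' (b j i • f (Pi.single i 1))) := by
      intro i
      have h2 := LinearMap.congr_fun (hz i) (Pi.single k' (f (Pi.single i 1)))
      rw [LinearMap.smul_apply, hx] at h2
      rw [Pi.smul_apply, smul_assoc, h2, LinearMap.sum_apply]
      refine Finset.sum_congr rfl fun j _ => ?_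
      rw [LinearMap.smul_apply, Pi.single_smul, map_smul]
    rw [hfs]
    simp_rw [h1]
    rw [Finset.sum_comm]
    refine Finset.sum_eq_zero fun j _ => ?_
    have h3 : ∑ i, (Pi.single k' (b j i • f (Pi.single i 1)) : J → I) = 0 := by
      have := map_sum (LinearMap.single R (fun _ : J => I) k')
        (fun i => b j i • f (Pi.single i 1)) Finset.univ
      rw [hfb, map_zero] at this
      exact this.symm
    rw [← map_sum, h3, map_zero]

lemma exists_cogen (R : Type u) [CommRing R] : IsInjectiveCogenerator R (CharacterModule R) := by
  refine ⟨Module.Flat.iff_characterModule_injective.1 inferInstance, ?_⟩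
  intro T _ _ h
  refine ⟨fun x y => ?_⟩
  rw [← sub_eq_zero]
  apply CharacterModule.eq_zero_of_character_apply
  intro c
  let φ : T →ₗ[R] CharacterModule R :=
    { toFun := fun t => c.comp (LinearMap.toSpanSingleton R T t).toAddMonoidHom
      map_add' := fun t t' => by
        refine AddMonoidHom.ext fun r => ?_
        change c (r • (t + t')) = c (r • t) + c (r • t')
        rw [smul_add, map_add]
      map_smul' := fun r t => by
        refine AddMonoidHom.ext fun r' => ?_
        change c (r' • (r • t)) = c ((r • r') • t)
        rw [smul_eq_mul, mul_comm, mul_smul] }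
  have h1 : φ (x - y) = 0 := by rw [h φ]; rfl
  have h2 : c ((1 : R) • (x - y)) = 0 := DFunLike.congr_fun h1 (1 : R)
  rwa [one_smul] at h2

lemma aflat_free {R : Type u} [CommRing R] (m : Ideal R) (J : Type u) : AFlat m (J →₀ R) := by
  intro ι _ a x hx s _
  have h3 : ∑ i, a i • (s • x i) = 0 := by
    simp_rw [smul_comm _ s, ← Finset.smul_sum, hx, smul_zero]
  obtain ⟨k, b, z, hz, hb⟩ := Module.Flat.isTrivialRelation_of_sum_smul_eq_zero h3
  exact ⟨Fin k, inferInstance, fun j i => b i j, z, hb, hz⟩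

/-- Characterizations of almost coherent rings via `Hom` modules. -/
theorem almostCoherent_iff_hom_almostFlat
    {R : Type u} [CommRing R] (m : Ideal R) (hm : m * m = m) :
    -- (1) ↔ (2)
    ((IsAlmostCoherent m ↔
      (∀ (E : Type u) [AddCommGroup E] [Module R E], IsAlmostAbsolutelyPure m E →
        ∀ (I : Type u) [AddCommGroup I] [Module R I], Module.Injective R I →
          IsAlmostFlat m (E →ₗ[R] I))) ∧
    -- (1) ↔ (3)
    (IsAlmostCoherent m ↔
      (∀ (I : Type u) [AddCommGroup I] [Module R I], IsInjectiveCogenerator R I →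
        ∀ (E : Type u) [AddCommGroup E] [Module R E], IsAlmostAbsolutelyPure m E →
          IsAlmostFlat m (E →ₗ[R] I))) ∧
    -- (1) ↔ (4)
    (IsAlmostCoherent m ↔
      (∀ (F : Type u) [AddCommGroup F] [Module R F], IsAlmostFlat m F →
        ∀ (I₁ I₂ : Type u) [AddCommGroup I₁] [Module R I₁] [AddCommGroup I₂] [Module R I₂],
          Module.Injective R I₁ → Module.Injective R I₂ →
            IsAlmostFlat m ((F →ₗ[R] I₁) →ₗ[R] I₂))) ∧
    -- (1) ↔ (5)
    (IsAlmostCoherent m ↔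
      (∀ (I₁ I₂ : Type u) [AddCommGroup I₁] [Module R I₁] [AddCommGroup I₂] [Module R I₂],
        IsInjectiveCogenerator R I₁ → IsInjectiveCogenerator R I₂ →
          ∀ (F : Type u) [AddCommGroup F] [Module R F], IsAlmostFlat m F →
            IsAlmostFlat m ((F →ₗ[R] I₁) →ₗ[R] I₂)))) := by
  have h12 : IsAlmostCoherent m →
      (∀ (E : Type u) [AddCommGroup E] [Module R E], EP m E →
        ∀ (I : Type u) [AddCommGroup I] [Module R I], Module.Injective R I →
          IsAlmostFlat m (E →ₗ[R] I)) :=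
    fun h E _ _ hE I _ _ hI => (aflat_hom hm (h.kfg hm) hI hE).isAlmostFlat hm
  have hcog := exists_cogen R
  have back : (∀ J : Type u, IsAlmostFlat m
      (((J →₀ R) →ₗ[R] CharacterModule R) →ₗ[R] CharacterModule R)) → IsAlmostCoherent m :=
    fun h => (kfg_of_aflat hcog fun J => (h J).aflat).isAlmostCoherent
  refine ⟨⟨fun h E _ _ hE I _ _ hI => h12 h E hE.ep I hI, fun h => back fun J => ?_⟩,
    ⟨fun h I _ _ hI E _ _ hE => h12 h E hE.ep I hI.1, fun h => back fun J => ?_⟩,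
    ⟨fun h F _ _ hF I₁ I₂ _ _ _ _ h₁ h₂ => h12 h _ (ep_hom h₁ hF.aflat) I₂ h₂,
      fun h => back fun J => ?_⟩,
    ⟨fun h I₁ I₂ _ _ _ _ h₁ h₂ F _ _ hF => h12 h _ (ep_hom h₁.1 hF.aflat) I₂ h₂.1,
      fun h => back fun J => ?_⟩⟩
  · exact h _ (isAlmostAbsolutelyPure_hom m hcog.1 J) _ hcog.1
  · exact h _ hcog _ (isAlmostAbsolutelyPure_hom m hcog.1 J)
  · exact h _ ((aflat_free m J).isAlmostFlat hm) _ _ hcog.1 hcog.1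
  · exact h _ _ hcog hcog _ ((aflat_free m J).isAlmostFlat hm)
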